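/- arXiv:2303.14321 — 9 statements merged into one kernel-verified Lean document; each statement's English description precedes it below -/
import Mathlib

section
/- Let w, M, z be positive integers. Then the equality ⌊(w·(z+ε))/M⌋ = (w·z) div M holds for every real number ε with 0 ≤ ε < 1 if and only if (w·z) rem M + w − 1 < M. -/
/-! Write `w * z = r + M * q` with `0 ≤ r < M`. As `ε` runs over `[0, 1)`, the value
`w * (z + ε)` runs over `[r + M * q, r + M * q + w)`. The floor of its quotient by `M` is
constantly `q` exactly when this interval stays below `M * (q + 1)`, that is, when `r + w ≤ M`;
over the integers this is `r + w - 1 < M`. -/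

/-- Let `w`, `M`, `z` be positive integers. Then `⌊(w·(z+ε))/M⌋ = (w·z) div M`
holds for every real `ε` with `0 ≤ ε < 1` if and only if
`(w·z) rem M + w − 1 < M`. -/
theorem exact_short_product_iff (w M z : ℤ) (hw : 0 < w) (hM : 0 < M) (hz : 0 < z) :
    (∀ ε : ℝ, 0 ≤ ε → ε < 1 →
      ⌊((w : ℝ) * ((z : ℝ) + ε)) / (M : ℝ)⌋ = (w * z) / M) ↔
    (w * z) % M + w - 1 < M := by
  have hwR : (0 : ℝ) < w := by exact_mod_cast hw
  have hMR : (0 : ℝ) < M := by exact_mod_cast hM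
  have hr0 := Int.emod_nonneg (w * z) hM.ne'
  have hrM := Int.emod_lt_of_pos (w * z) hM
  have hdiv := Int.emod_add_mul_ediv (w * z) M
  generalize (w * z) % M = r at *
  generalize (w * z) / M = q at *
  have hdivR : (r : ℝ) + M * q = w * z := by exact_mod_cast hdiv
  constructor
  · intro h
    by_contra hlt
    have hrw : M - r < w := by omega
    have hrwR : (M : ℝ) - r < w := by exact_mod_cast hrw
    have hrMR : (r : ℝ) < M := by exact_mod_cast hrM
    -- This `ε` lifts `w * z` exactly to the next multiple of `M`, so the floor is `q + 1`.
    have hε := h ((M - r) / w) (div_nonneg (by linarith) hwR.le) ((div_lt_one hwR).2 hrwR)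
    have hval : (w : ℝ) * (z + (M - r) / w) / M = ((q + 1 : ℤ) : ℝ) := by
      rw [div_eq_iff hMR.ne', mul_add, mul_div_cancel₀ _ hwR.ne']
      push_cast
      linarith
    rw [hval, Int.floor_intCast] at hε
    omega
  · intro h ε hε0 hε1
    have hrw : r + w ≤ M := by omega
    have hrwR : (r : ℝ) + w ≤ M := by exact_mod_cast hrw
    have hr0R : (0 : ℝ) ≤ r := by exact_mod_cast hr0
    have hwε0 : 0 ≤ (w : ℝ) * ε := mul_nonneg hwR.le hε0
    have hwε1 : (w : ℝ) * ε < w := mul_lt_of_lt_one_right hwR hε1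
    rw [Int.floor_eq_iff, le_div_iff₀ hMR, div_lt_iff₀ hMR]
    constructor <;> linarith
end

section
/- Let z, M, α, β be positive integers with α ≠ β and max(α, β) < M div gcd(M, z). Suppose that for every integer w with 1 ≤ w ≤ max(α, β) we have (α·z) rem M ≤ (w·z) rem M ≤ (β·z) rem M (so α locates the running minimum and β the running maximum). Let v = ((α+β)·z) rem M. Then either (a) v > (β·z) rem M, and in this case (α·z) rem M ≤ (w·z) rem M ≤ v for every integer w with 1 ≤ w ≤ α+β (v is the new running maximum and α remains the location of the minimum); or (b) v < (α·z) rem M, and in this case v ≤ (w·z) rem M ≤ (β·z) rem M for every integer w with 1 ≤ w ≤ α+β (v is the new running minimum and β remains the location of the maximum). -/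
/-!
Write `f w = (w * z) % M`. Since `0 < α < M / gcd(M, z)`, `M` does not divide `α * z`, so
`0 < f α`. Hence `f (α + β)` is `f α + f β > f β` when there is no wrap-around, and
`f α + f β - M < f α` otherwise. A new index `w` with `max α β < w < α + β` is `α + β - u` with
`1 ≤ u < min α β`, so `f α ≤ f u ≤ f β`. The reflected value `f α + f β - f u` is then between
`f α` and `f β`, hence already reduced modulo `M` and equal to `f w`: no index strictly below
`α + β` leaves the old range.
-/

/-- The period of `w ↦ (w * z) % M` is `M / gcd(M, z)`, so no smaller positive index gives `0`. -/
theorem emod_pos_of_lt_period (z M a : ℤ) (hM : 0 < M) (ha : 0 < a)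
    (hlt : a < M / (Int.gcd M z : ℤ)) : 0 < (a * z) % M := by
  refine lt_of_le_of_ne (Int.emod_nonneg _ hM.ne') fun h => ?_
  have hd : M ∣ a * z := Int.dvd_of_emod_eq_zero h.symm
  have hg : 0 < Int.gcd M z := Int.gcd_pos_of_ne_zero_left _ hM.ne'
  have hg' : (0 : ℤ) < Int.gcd M z := by exact_mod_cast hg
  have hcop : IsCoprime (M / (Int.gcd M z : ℤ)) (z / (Int.gcd M z : ℤ)) :=
    Int.isCoprime_iff_gcd_eq_one.mpr (Int.gcd_ediv_gcd_ediv_gcd hg)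
  have hd2 : M / (Int.gcd M z : ℤ) ∣ a * (z / (Int.gcd M z : ℤ)) := by
    rw [← Int.mul_ediv_assoc _ (Int.gcd_dvd_right M z)]
    exact Int.ediv_dvd_ediv (Int.gcd_dvd_left M z) hd
  exact absurd (Int.le_of_dvd ha (hcop.dvd_of_dvd_mul_right hd2)) (not_le.mpr hlt)

/-- Indices strictly below `α + β` keep their values in the old range, by the reflection
`w ↦ α + β - w`. -/
theorem mem_range_of_lt_add (z M α β : ℤ) (hM : 0 < M)
    (hext : ∀ w : ℤ, 1 ≤ w → w ≤ max α β →
      (α * z) % M ≤ (w * z) % M ∧ (w * z) % M ≤ (β * z) % M)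
    (w : ℤ) (h1 : 1 ≤ w) (hw : w < α + β) :
    (α * z) % M ≤ (w * z) % M ∧ (w * z) % M ≤ (β * z) % M := by
  rcases le_or_gt w (max α β) with h | h
  · exact hext w h1 h
  · obtain ⟨hu1, hu2⟩ := hext (α + β - w) (by omega) (by omega)
    have hA := Int.emod_nonneg (α * z) hM.ne'
    have hB := Int.emod_lt_of_pos (β * z) hM
    have key : (w * z) % M = (α * z) % M + (β * z) % M - ((α + β - w) * z) % M := by
      have e : w * z = α * z + β * z - (α + β - w) * z := by ring
      rw [← Int.emod_eq_of_lt (a := (α * z) % M + (β * z) % M - ((α + β - w) * z) % M) (b := M)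
        (by omega) (by omega)]
      conv_lhs => rw [e]
      simp [Int.sub_emod, Int.add_emod]
    omega

/-- Lemma on extrema of `(w·z) rem M`: if `α` locates the running minimum and
`β` the running maximum over `1 ≤ w ≤ max α β`, then `v = ((α+β)·z) rem M` is
either a new running maximum (with `α` still the minimum) or a new running
minimum (with `β` still the maximum) over `1 ≤ w ≤ α + β`. -/
theorem next_extremum_at_sum (z M α β : ℤ) (hz : 0 < z) (hM : 0 < M)
    (hα : 0 < α) (hβ : 0 < β) (hne : α ≠ β)
    (hlt : max α β < M / (Int.gcd M z : ℤ))
    (hext : ∀ w : ℤ, 1 ≤ w → w ≤ max α β →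
      (α * z) % M ≤ (w * z) % M ∧ (w * z) % M ≤ (β * z) % M) :
    (((α + β) * z) % M > (β * z) % M ∧
      ∀ w : ℤ, 1 ≤ w → w ≤ α + β →
        (α * z) % M ≤ (w * z) % M ∧ (w * z) % M ≤ ((α + β) * z) % M) ∨
    (((α + β) * z) % M < (α * z) % M ∧
      ∀ w : ℤ, 1 ≤ w → w ≤ α + β →
        ((α + β) * z) % M ≤ (w * z) % M ∧ (w * z) % M ≤ (β * z) % M) := by
  have hA := emod_pos_of_lt_period z M α hM hα (lt_of_le_of_lt (le_max_left _ _) hlt)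
  have hAM := Int.emod_lt_of_pos (α * z) hM
  have hB := Int.emod_lt_of_pos (β * z) hM
  have hAB := (hext α hα (le_max_left _ _)).2
  have hv : ((α + β) * z) % M = ((α * z) % M + (β * z) % M) % M := by
    rw [add_mul, Int.add_emod]
  have hr := mem_range_of_lt_add z M α β hM hext
  rcases lt_or_ge ((α * z) % M + (β * z) % M) M with h | h
  · rw [Int.emod_eq_of_lt (by omega) h] at hv
    refine Or.inl ⟨by omega, fun w h1 hw => ?_⟩
    rcases hw.lt_or_eq with hw | rfl
    · have := hr w h1 hw
      omega
    · omega
  · have hw : ((α * z) % M + (β * z) % M) % M = (α * z) % M + (β * z) % M - M := by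
      rw [← Int.sub_emod_right ((α * z) % M + (β * z) % M)]
      exact Int.emod_eq_of_lt (by omega) (by omega)
    rw [hw] at hv
    refine Or.inr ⟨by omega, fun w h1 hw => ?_⟩
    rcases hw.lt_or_eq with hw | rfl
    · have := hr w h1 hw
      omega
    · omega
end

section
/- Let z, M, α, β be positive integers with α ≠ β and max(α, β) < M div gcd(M, z). Suppose that for every integer w with 1 ≤ w ≤ max(α, β) we have (α·z) rem M ≤ (w·z) rem M ≤ (β·z) rem M. Then either ((α+β)·z) rem M = (α·z) rem M + (β·z) rem M, which is strictly greater than (β·z) rem M; or ((α+β)·z) rem M = (α·z) rem M + (β·z) rem M − M, which is strictly less than (α·z) rem M. In particular ((α+β)·z) rem M never lies in the closed interval [(α·z) rem M, (β·z) rem M]. -/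
/-! The remainders `a = (α * z) % M` and `b = (β * z) % M` lie in `[0, M)`, and the
remainder of `(α + β) * z` is `a + b` or `a + b - M`. In the second case it is below `a`
because `b < M`; in the first it is above `b` as soon as `a ≠ 0`, which holds because the
positive integer `α` is smaller than `M / gcd M z`, the additive order of `z` modulo `M`. -/

theorem Int.ediv_gcd_dvd_of_dvd_mul {M z a : ℤ} (hM : 0 < M) (h : M ∣ a * z) :
    M / (Int.gcd M z : ℤ) ∣ a := by
  have hg : 0 < Int.gcd M z := Int.gcd_pos_of_ne_zero_left z hM.ne'
  have hg' : (Int.gcd M z : ℤ) ≠ 0 := by exact_mod_cast hg.ne'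
  have hc : IsCoprime (M / (Int.gcd M z : ℤ)) (z / (Int.gcd M z : ℤ)) :=
    Int.isCoprime_iff_gcd_eq_one.2 (Int.gcd_ediv_gcd_ediv_gcd hg)
  refine hc.dvd_of_dvd_mul_right ?_
  rw [← Int.mul_ediv_assoc a (Int.gcd_dvd_right M z)]
  exact Int.ediv_dvd_ediv (Int.gcd_dvd_left M z) h


/-- With `α` the running minimum location and `β` the running maximum location
over `1 ≤ w ≤ max α β`, the value `((α+β)·z) rem M` equals either the sum of
the two extremal remainders (and then exceeds the maximum), or that sum minus
`M` (and then is below the minimum); in particular it never lies in the closed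
interval between the two extremal remainders. -/
theorem sum_extremum_value (z M α β : ℤ) (hz : 0 < z) (hM : 0 < M)
    (hα : 0 < α) (hβ : 0 < β) (hne : α ≠ β)
    (hlt : max α β < M / (Int.gcd M z : ℤ))
    (hext : ∀ w : ℤ, 1 ≤ w → w ≤ max α β →
      (α * z) % M ≤ (w * z) % M ∧ (w * z) % M ≤ (β * z) % M) :
    ((((α + β) * z) % M = (α * z) % M + (β * z) % M ∧
        ((α + β) * z) % M > (β * z) % M) ∨
      (((α + β) * z) % M = (α * z) % M + (β * z) % M - M ∧
        ((α + β) * z) % M < (α * z) % M)) ∧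
    ¬((α * z) % M ≤ ((α + β) * z) % M ∧ ((α + β) * z) % M ≤ (β * z) % M) := by
  -- `α` is positive and below the additive order `M / gcd M z`, so `M ∤ α * z`
  have ha : (α * z) % M ≠ 0 := by
    intro h
    have hd : M / (Int.gcd M z : ℤ) ∣ α :=
      Int.ediv_gcd_dvd_of_dvd_mul hM (Int.dvd_of_emod_eq_zero h)
    have := Int.le_of_dvd hα hd
    have := le_max_left α β
    omega
  have ha0 := Int.emod_nonneg (α * z) hM.ne'
  have haM := Int.emod_lt_of_pos (α * z) hM
  have hb0 := Int.emod_nonneg (β * z) hM.ne'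
  have hbM := Int.emod_lt_of_pos (β * z) hM
  have hs : ((α + β) * z) % M = ((α * z) % M + (β * z) % M) % M := by
    rw [add_mul, Int.add_emod]
  rcases lt_or_ge ((α * z) % M + (β * z) % M) M with h | h
  · rw [Int.emod_eq_of_lt (by omega) h] at hs
    omega
  · have ht : ((α * z) % M + (β * z) % M - M) % M = (α * z) % M + (β * z) % M - M :=
      Int.emod_eq_of_lt (by omega) (by omega)
    rw [Int.sub_emod_right] at ht
    omega
end

section
/- Let z and M be positive integers, set b = z rem M, and assume 2·b ≥ M. Then for every integer k with 1 ≤ k ≤ b div (M − b), we have ((k+1)·z) rem M = b − k·(M − b), and moreover ((k+1)·z) rem M < (j·z) rem M for every integer j with 1 ≤ j ≤ k: each of these values is a new running minimum of the sequence w ↦ (w·z) rem M. -/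
/-! Modulo `M`, each further addition of `z` amounts to subtracting `M - b`, where `b = z % M`.
Starting from `b`, this can be done `b / (M - b)` times before the value becomes negative, so up to
that point `b - k * (M - b)` is itself the remainder of `(k + 1) * z`. Since `M - b > 0`, these
remainders strictly decrease; the case `k = 0` supplies the first term of the run. -/

/-- With `b = z rem M` and `2·b ≥ M`: for every `1 ≤ k ≤ b div (M − b)` we have
`((k+1)·z) rem M = b − k·(M − b)` and this value is a new running minimum,
i.e., it is smaller than `(j·z) rem M` for all `1 ≤ j ≤ k`. -/
theorem initial_run_of_minima (z M : ℤ) (hz : 0 < z) (hM : 0 < M)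
    (hb : 2 * (z % M) ≥ M) :
    ∀ k : ℤ, 1 ≤ k → k ≤ (z % M) / (M - z % M) →
      ((k + 1) * z) % M = z % M - k * (M - z % M) ∧
      ∀ j : ℤ, 1 ≤ j → j ≤ k → ((k + 1) * z) % M < (j * z) % M := by
  have hlt : z % M < M := Int.emod_lt_of_pos z hM
  have hd : 0 < M - z % M := by linarith
  have key : ∀ i : ℤ, 0 ≤ i → i ≤ (z % M) / (M - z % M) →
      ((i + 1) * z) % M = z % M - i * (M - z % M) := by
    intro i hi hile
    have hmul : i * (M - z % M) ≤ z % M := (Int.le_ediv_iff_mul_le hd).mp hile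
    have hnonneg : 0 ≤ i * (M - z % M) := mul_nonneg hi hd.le
    have hdecomp : (i + 1) * z =
        (z % M - i * (M - z % M)) + M * ((i + 1) * (z / M) + i) := by
      linear_combination -(i + 1) * Int.emod_add_mul_ediv z M
    rw [hdecomp, Int.add_mul_emod_self_left]
    exact Int.emod_eq_of_lt (by linarith) (by linarith)
  intro k hk hkle
  have hk_val := key k (by linarith) hkle
  refine ⟨hk_val, fun j hj hjk => ?_⟩
  have hj_val := key (j - 1) (by linarith) (by linarith)
  rw [sub_add_cancel] at hj_val
  rw [hk_val, hj_val]
  have hgap : (j - 1) * (M - z % M) < k * (M - z % M) :=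
    mul_lt_mul_of_pos_right (by linarith) hd
  linarith
end

section
/- Let z, M, α, β be positive integers with α < β, set a = (α·z) rem M and b = (β·z) rem M, assume a > 0, a + b < M, and that a ≤ (w·z) rem M ≤ b for every integer w with 1 ≤ w ≤ β. Let T = (M − b − 1) div a and assume β + T·α ≤ M div gcd(M, z). Then for every integer t with 0 ≤ t ≤ T: ((β + t·α)·z) rem M = b + t·a, and a ≤ (w·z) rem M ≤ b + t·a for every integer w with 1 ≤ w ≤ β + t·α; that is, the sequence of running maxima continues with equispaced locations β, β+α, β+2α, …, β+Tα and values b, b+a, b+2a, …, b+Ta, while a remains the running minimum. -/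
/-! Write `r w = (w * z) % M`, `a = r α` and `b = r β`. As long as `r w + a < M`, adding `α` to
the index adds exactly `a` to the residue. The bound `t ≤ T` says `b + t * a < M`. Hence, in an
induction on `t`, each index `w` beyond `β + t * α` is `α` plus a positive index `w - α` of the
range already treated (positive because `α < β`), and its residue is `r (w - α) + a`, which lies
between `a` and `b + (t + 1) * a`. -/

/-- Shifting the index by `α` adds the residues when no wrap-around modulo `M` occurs. -/
lemma emod_shift (z M α w : ℤ) (hM : 0 < M) (h : (w * z) % M + (α * z) % M < M) :
    ((w + α) * z) % M = (w * z) % M + (α * z) % M := by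
  rw [add_mul, Int.add_emod]
  exact Int.emod_eq_of_lt
    (add_nonneg (Int.emod_nonneg _ hM.ne') (Int.emod_nonneg _ hM.ne')) h


/-- Continuation of a run of maxima: with `a = (α·z) rem M` the running minimum
and `b = (β·z) rem M` the running maximum over `1 ≤ w ≤ β` (where `α < β`,
`a > 0`, `a + b < M`), setting `T = (M − b − 1) div a`, for every `0 ≤ t ≤ T`
we have `((β + t·α)·z) rem M = b + t·a` and
`a ≤ (w·z) rem M ≤ b + t·a` for all `1 ≤ w ≤ β + t·α`. -/
theorem run_of_maxima_continues (z M α β : ℤ) (hz : 0 < z) (hM : 0 < M)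
    (hα : 0 < α) (hβ : 0 < β) (hαβ : α < β)
    (ha : 0 < (α * z) % M)
    (hab : (α * z) % M + (β * z) % M < M)
    (hext : ∀ w : ℤ, 1 ≤ w → w ≤ β →
      (α * z) % M ≤ (w * z) % M ∧ (w * z) % M ≤ (β * z) % M)
    (hT : β + ((M - (β * z) % M - 1) / ((α * z) % M)) * α ≤
      M / (Int.gcd M z : ℤ)) :
    ∀ t : ℤ, 0 ≤ t → t ≤ (M - (β * z) % M - 1) / ((α * z) % M) →
      ((β + t * α) * z) % M = (β * z) % M + t * ((α * z) % M) ∧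
      ∀ w : ℤ, 1 ≤ w → w ≤ β + t * α →
        (α * z) % M ≤ (w * z) % M ∧
        (w * z) % M ≤ (β * z) % M + t * ((α * z) % M) := by
  intro t ht
  induction t, ht using Int.le_induction with
  | base =>
    intro _
    simpa using hext
  | succ t ht ih =>
    intro hle
    obtain ⟨h1, h2⟩ := ih (by omega)
    have hlt : (β * z) % M + t * ((α * z) % M) + (α * z) % M < M := by
      have := (Int.le_ediv_iff_mul_le ha).1 hle
      linarith
    refine ⟨?_, fun w hw1 hw2 => ?_⟩
    · rw [show β + (t + 1) * α = (β + t * α) + α by ring,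
        emod_shift z M α _ hM (by rw [h1]; exact hlt), h1]
      ring
    · by_cases hw : w ≤ β + t * α
      · obtain ⟨h3, h4⟩ := h2 w hw1 hw
        exact ⟨h3, by linarith⟩
      · have htα : 0 ≤ t * α := mul_nonneg ht hα.le
        obtain ⟨h3, h4⟩ := h2 (w - α) (by linarith) (by linarith)
        have h5 := emod_shift z M α (w - α) hM (by linarith)
        rw [sub_add_cancel] at h5
        rw [h5]
        exact ⟨by linarith, by linarith⟩
end

section
/- Let z, M, α, β be positive integers with β < α, set a = (α·z) rem M and b = (β·z) rem M, assume b < M (automatic) with M − b > 0, and that a ≤ (w·z) rem M ≤ b for every integer w with 1 ≤ w ≤ α. Let T = a div (M − b) and assume α + T·β ≤ M div gcd(M, z). Then for every integer t with 0 ≤ t ≤ T: ((α + t·β)·z) rem M = a − t·(M − b), and a − t·(M − b) ≤ (w·z) rem M ≤ b for every integer w with 1 ≤ w ≤ α + t·β; that is, the sequence of running minima continues with equispaced locations α, α+β, α+2β, …, α+Tβ and values a, a−(M−b), a−2(M−b), …, a−T(M−b), while b remains the running maximum. -/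
/-!
Write `f w = (w * z) % M`, `b = f β` and `d = M - b`. Since `β * z ≡ -d` modulo `M`, translating the
index by `β` lowers `f` by exactly `d` as long as no wrap-around occurs, that is, as long as
`d ≤ f v` (`emod_add_shift`). For `t + 1 ≤ T` the minimum of `f` over `1, …, α + t * β` is
`a - t * d ≥ d`, so no index in this range wraps around. Every new index
`w ∈ (α + t * β, α + (t + 1) * β]` has the form `v + β` with `v` in the old range (`v ≥ 1` because
`β < α`), so `a - (t + 1) * d ≤ f w ≤ b - d ≤ b`, and the lower bound is attained at
`w = α + (t + 1) * β`. Induction on `t` gives the result.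
-/

theorem emod_add_shift {z M β v : ℤ} (hM : 0 < M)
    (h : M - (β * z) % M ≤ (v * z) % M) :
    ((v + β) * z) % M = (v * z) % M - (M - (β * z) % M) := by
  have hv := Int.emod_lt_of_pos (v * z) hM
  have hb := Int.emod_lt_of_pos (β * z) hM
  rw [add_mul, Int.add_emod, ← Int.sub_emod_right, Int.emod_eq_of_lt] <;> linarith


/-- Continuation of a run of minima: with `a = (α·z) rem M` the running minimum
and `b = (β·z) rem M` the running maximum over `1 ≤ w ≤ α` (where `β < α`),
setting `T = a div (M − b)`, for every `0 ≤ t ≤ T` we have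
`((α + t·β)·z) rem M = a − t·(M − b)` and
`a − t·(M − b) ≤ (w·z) rem M ≤ b` for all `1 ≤ w ≤ α + t·β`. -/
theorem run_of_minima_continues (z M α β : ℤ) (hz : 0 < z) (hM : 0 < M)
    (hα : 0 < α) (hβ : 0 < β) (hβα : β < α)
    (hb : (β * z) % M < M)
    (hMb : 0 < M - (β * z) % M)
    (hext : ∀ w : ℤ, 1 ≤ w → w ≤ α →
      (α * z) % M ≤ (w * z) % M ∧ (w * z) % M ≤ (β * z) % M)
    (hT : α + (((α * z) % M) / (M - (β * z) % M)) * β ≤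
      M / (Int.gcd M z : ℤ)) :
    ∀ t : ℤ, 0 ≤ t → t ≤ ((α * z) % M) / (M - (β * z) % M) →
      ((α + t * β) * z) % M = (α * z) % M - t * (M - (β * z) % M) ∧
      ∀ w : ℤ, 1 ≤ w → w ≤ α + t * β →
        (α * z) % M - t * (M - (β * z) % M) ≤ (w * z) % M ∧
        (w * z) % M ≤ (β * z) % M := by
  intro t ht
  induction t, ht using Int.leInduction with
  | base =>
    intro _
    simpa using hext
  | succ t ht ih =>
    intro htT
    obtain ⟨hval, hall⟩ := ih (by linarith)
    have hroom : (t + 1) * (M - (β * z) % M) ≤ (α * z) % M :=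
      (Int.le_ediv_iff_mul_le hMb).1 htT
    have htβ : 0 ≤ t * β := mul_nonneg ht hβ.le
    refine ⟨?_, fun w hw1 hw => ?_⟩
    · rw [show α + (t + 1) * β = α + t * β + β by ring, emod_add_shift hM (by linarith), hval]
      ring
    · rcases le_or_gt w (α + t * β) with hle | hgt
      · obtain ⟨h1, h2⟩ := hall w hw1 hle
        exact ⟨by linarith, h2⟩
      · obtain ⟨h1, h2⟩ := hall (w - β) (by linarith) (by linarith)
        have hs := emod_add_shift (z := z) (β := β) (v := w - β) hM (by linarith)
        rw [sub_add_cancel] at hs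
        rw [hs]
        exact ⟨by linarith, by linarith⟩
end

section
/- Let z and M be positive integers with z rem M ≠ 0, let c be a nonnegative integer (an offset), and let β and k be positive integers with k ≤ M div gcd(M, z). Set V = (c + β·z) rem M and let m be the minimum of (c + w·z) rem M over 1 ≤ w ≤ β. Suppose that (c + w·z) rem M ≤ V for every integer w with 1 ≤ w ≤ β, that m ≤ (c + (β + j)·z) rem M ≤ V for every integer j with 1 ≤ j ≤ k − 1, and that (c + (β + k)·z) rem M > V or (c + (β + k)·z) rem M < m (the next extremum of the offset sequence occurs at gap k after the last maximum). Then (k·z) rem M ≤ (j·z) rem M for every integer j with 1 ≤ j ≤ k; that is, k locates a running minimum of the offset-free sequence w ↦ (w·z) rem M. -/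
/-!
Write `V` for the value at `β` and `r j = (j * z) % M`. The value at `β + j` is `V + r j` if this is
less than `M`, and `V + r j - M` otherwise. Suppose `r j < r k` with `1 ≤ j < k`.
If `V + r j < M`, the value at `β + j` is `V + r j ≤ V`, so `r j = 0`, which is impossible since `j`
is smaller than the period `M / gcd(M, z)`. Otherwise both values wrap around, so the value at
`β + k` lies strictly above the one at `β + j`, hence above `m`, and it is below `V`: it does not
leave `[m, V]`.
-/

/-- The sequence `j ↦ j * z` does not vanish modulo `M` strictly before its period. -/
lemma mul_emod_ne_zero_of_lt_period {z M j : ℤ} (hM : 0 < M) (hj : 0 < j)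
    (hjP : j < M / (Int.gcd M z : ℤ)) : (j * z) % M ≠ 0 := by
  intro h
  have hg : 0 < Int.gcd M z := Int.gcd_pos_of_ne_zero_left z hM.ne'
  have hco := Int.isCoprime_iff_gcd_eq_one.mpr (Int.gcd_ediv_gcd_ediv_gcd hg)
  have hdvd : M / (Int.gcd M z : ℤ) ∣ j * (z / (Int.gcd M z : ℤ)) := by
    rw [← Int.mul_ediv_assoc _ (Int.gcd_dvd_right M z)]
    exact Int.ediv_dvd_ediv (Int.gcd_dvd_left M z) (Int.dvd_of_emod_eq_zero h)
  exact absurd (Int.le_of_dvd hj (hco.dvd_of_dvd_mul_right hdvd)) (not_le.mpr hjP)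

/-- Advancing by `j` adds `(j * z) % M` to the remainder, with at most one wrap-around. -/
lemma offset_step (z M c β j : ℤ) (hM : 0 < M) :
    (c + (β + j) * z) % M = (c + β * z) % M + (j * z) % M ∨
    (c + (β + j) * z) % M = (c + β * z) % M + (j * z) % M - M := by
  have e : (c + (β + j) * z) % M = ((c + β * z) % M + (j * z) % M) % M := by
    rw [← Int.add_emod]; congr 1; ring
  have h1 := Int.emod_nonneg (c + β * z) hM.ne'
  have h2 := Int.emod_lt_of_pos (c + β * z) hM
  have h3 := Int.emod_nonneg (j * z) hM.ne'
  have h4 := Int.emod_lt_of_pos (j * z) hM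
  rw [e]
  rcases lt_or_ge ((c + β * z) % M + (j * z) % M) M with h | h
  · left
    exact Int.emod_eq_of_lt (by omega) h
  · right
    rw [← Int.sub_emod_right]
    exact Int.emod_eq_of_lt (by omega) (by omega)

/-- Gaps between extrema of the offset sequence `w ↦ (c + w·z) rem M`:
if `V = (c + β·z) rem M` is the running maximum over `1 ≤ w ≤ β`, `m` is the
running minimum over that range, the values at `β + 1, …, β + k − 1` stay
within `[m, V]`, and the value at `β + k` leaves `[m, V]` (the next extremum
occurs at gap `k`), then `k` locates a running minimum of the offset-free
sequence: `(k·z) rem M ≤ (j·z) rem M` for all `1 ≤ j ≤ k`. -/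
theorem offset_gap_is_running_minimum (z M c β k m : ℤ) (hz : 0 < z) (hM : 0 < M)
    (hzM : z % M ≠ 0) (hc : 0 ≤ c) (hβ : 0 < β) (hk : 0 < k)
    (hkP : k ≤ M / (Int.gcd M z : ℤ))
    (hm_mem : ∃ w : ℤ, 1 ≤ w ∧ w ≤ β ∧ (c + w * z) % M = m)
    (hm_min : ∀ w : ℤ, 1 ≤ w → w ≤ β → m ≤ (c + w * z) % M)
    (hV_max : ∀ w : ℤ, 1 ≤ w → w ≤ β → (c + w * z) % M ≤ (c + β * z) % M)
    (hbetween : ∀ j : ℤ, 1 ≤ j → j ≤ k - 1 →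
      m ≤ (c + (β + j) * z) % M ∧ (c + (β + j) * z) % M ≤ (c + β * z) % M)
    (hnext : (c + (β + k) * z) % M > (c + β * z) % M ∨
      (c + (β + k) * z) % M < m) :
    ∀ j : ℤ, 1 ≤ j → j ≤ k → (k * z) % M ≤ (j * z) % M := by
  intro j hj hjk
  rcases eq_or_lt_of_le hjk with rfl | hlt
  · exact le_rfl
  by_contra! hr
  obtain ⟨hb1, hb2⟩ := hbetween j hj (by omega)
  have hne := mul_emod_ne_zero_of_lt_period hM (by omega) (lt_of_lt_of_le hlt hkP)
  have h0 := Int.emod_nonneg (j * z) hM.ne'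
  have hkM := Int.emod_lt_of_pos (k * z) hM
  have hfk := Int.emod_lt_of_pos (c + (β + k) * z) hM
  have sj := offset_step z M c β j hM
  have sk := offset_step z M c β k hM
  have hfj := Int.emod_nonneg (c + (β + j) * z) hM.ne'
  omega
end

section
/- Let M be a positive integer and let a, b be nonnegative integers. Then a rem M + b rem M < M if and only if (a + b) rem M ≥ max(a rem M, b rem M); equivalently, a rem M + b rem M ≥ M if and only if (a + b) rem M < min(a rem M, b rem M). -/
/-- `a rem M + b rem M < M` iff `(a+b) rem M ≥ max(a rem M, b rem M)`;
equivalently, `a rem M + b rem M ≥ M` iff `(a+b) rem M < min(a rem M, b rem M)`. -/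
theorem rem_add_lt_iff_ge_max (M a b : ℤ) (hM : 0 < M) (ha : 0 ≤ a) (hb : 0 ≤ b) :
    (a % M + b % M < M ↔ (a + b) % M ≥ max (a % M) (b % M)) ∧
    (a % M + b % M ≥ M ↔ (a + b) % M < min (a % M) (b % M)) := by
  have ha₀ := Int.emod_nonneg a hM.ne'
  have hb₀ := Int.emod_nonneg b hM.ne'
  have ha₁ := Int.emod_lt_of_pos a hM
  have hb₁ := Int.emod_lt_of_pos b hM
  -- The sum of the remainders lies in `[0, 2M)`, so reducing it mod `M` subtracts `M` at most once.
  rcases lt_or_ge (a % M + b % M) M with h | h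
  · have hs : (a + b) % M = a % M + b % M := by
      rw [Int.add_emod, Int.emod_eq_of_lt (by omega) h]
    omega
  · have hs : (a + b) % M = a % M + b % M - M := by
      rw [Int.add_emod, ← Int.sub_emod_right, Int.emod_eq_of_lt (by omega) (by omega)]
    omega
end

section
/- Let M be a positive integer and let a, b be nonnegative integers with a rem M > 0 and b rem M > 0. Then a rem M + b rem M < M if and only if (a + b) rem M > max(a rem M, b rem M). -/
/-!
Let `r` and `s` be the remainders of `a` and `b`, so `0 < r, s < M` and `(a + b) % M = (r + s) % M`.
If `r + s < M`, this is `r + s`, which exceeds both `r` and `s` because both are positive.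
Otherwise `M ≤ r + s < 2 * M`, so it is `r + s - M`, which is below both.
-/

/-- If `a rem M > 0` and `b rem M > 0`, then `a rem M + b rem M < M` iff
`(a+b) rem M > max(a rem M, b rem M)`. -/
theorem rem_add_lt_iff_gt_max (M a b : ℤ) (hM : 0 < M) (ha : 0 ≤ a) (hb : 0 ≤ b)
    (haM : 0 < a % M) (hbM : 0 < b % M) :
    a % M + b % M < M ↔ (a + b) % M > max (a % M) (b % M) := by
  have hra := Int.emod_lt_of_pos a hM
  have hrb := Int.emod_lt_of_pos b hM
  rw [Int.add_emod, gt_iff_lt, max_lt_iff]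
  rcases lt_or_ge (a % M + b % M) M with h | h
  · rw [Int.emod_eq_of_lt (by omega) h]
    omega
  · have hwrap : (a % M + b % M) % M = a % M + b % M - M := by
      rw [← Int.sub_emod_right, Int.emod_eq_of_lt (by omega) (by omega)]
    rw [hwrap]
    omega
end
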